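/- Let Ω ⊂ ℂⁿ be a bounded convex domain. Then for all distinct x, y ∈ Ω and every boundary point ξ ∈ ∂Ω lying on the complex line x + ℂ(x−y), the Kobayashi distance satisfies K_Ω(x,y) ≥ ½ log(|x−ξ|/|y−ξ|). -/

import Mathlib

open Metric Set MeasureTheory Filter Topology

noncomputable section

variable {E : Type*} [NormedAddCommGroup E] [NormedSpace ℂ E]

/-- Distance from `x` to the boundary of `D`. -/
def bdist (D : Set E) (x : E) : ℝ := Metric.infDist x (frontier D)

/-- Distance from `x` to the boundary of `D` along the complex line `x + ℂ v`. -/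
def bdistDir (D : Set E) (x v : E) : ℝ :=
  Metric.infDist x (frontier D ∩ {w | ∃ c : ℂ, w = x + c • v})

/-- The infinitesimal Kobayashi (pseudo-)metric of `D ⊆ E`. -/
def kobMetric (D : Set E) (x v : E) : ℝ :=
  sInf { r : ℝ | ∃ (f : ℂ → E) (ξ : ℂ),
    DifferentiableOn ℂ f (ball (0:ℂ) 1) ∧ MapsTo f (ball (0:ℂ) 1) D ∧
    f 0 = x ∧ ξ • derivWithin f (ball (0:ℂ) 1) 0 = v ∧ r = ‖ξ‖ }

/-- `σ` is absolutely continuous on `[a,b]`, with a.e. derivative `g`. -/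
def IsACWithDeriv (σ g : ℝ → E) (a b : ℝ) : Prop :=
  IntervalIntegrable g volume a b ∧
  ∀ t ∈ Icc a b, σ t = σ a + ∫ s in a..t, g s

/-- The Kobayashi pseudo-distance of `D`, defined via lengths of absolutely
continuous curves (Venturini's description). -/
def kobDist (D : Set E) (x y : E) : ℝ :=
  sInf { r : ℝ | ∃ (a b : ℝ) (σ g : ℝ → E), a ≤ b ∧
    IsACWithDeriv σ g a b ∧ MapsTo σ (Icc a b) D ∧ σ a = x ∧ σ b = y ∧
    r = ∫ t in a..b, kobMetric D (σ t) (g t) }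

/-- Log-type convex domain, with explicit constants `C, ν > 0`. -/
def LogTypeConvexWith (D : Set E) (C ν : ℝ) : Prop :=
  IsOpen D ∧ D.Nonempty ∧ Bornology.IsBounded D ∧ Convex ℝ D ∧ 0 < C ∧ 0 < ν ∧
  ∀ z ∈ D, ∀ v : E, v ≠ 0 →
    bdistDir D z v ≤ C / |Real.log (bdist D z)| ^ (1 + ν)

/-- Log-type convex domain. -/
def LogTypeConvex (D : Set E) : Prop := ∃ C ν : ℝ, LogTypeConvexWith D C ν

/-- A `ℂ`-convex set: every nonempty intersection with a complex affine line is
connected and simply connected. -/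
def CConvex (D : Set E) : Prop :=
  ∀ z v : E, v ≠ 0 → (D ∩ {w | ∃ c : ℂ, w = z + c • v}).Nonempty →
    IsConnected (D ∩ {w | ∃ c : ℂ, w = z + c • v}) ∧
    SimplyConnectedSpace ↥(D ∩ {w | ∃ c : ℂ, w = z + c • v})

/-- Log-type `ℂ`-convex domain. -/
def LogTypeCConvex (D : Set E) : Prop :=
  IsOpen D ∧ D.Nonempty ∧ Bornology.IsBounded D ∧ CConvex D ∧
  ∃ C ν : ℝ, 0 < C ∧ 0 < ν ∧
    ∀ z ∈ D, ∀ v : E, v ≠ 0 →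
      bdistDir D z v ≤ C / |Real.log (bdist D z)| ^ (1 + ν)

/-- `σ : [a,b] → D` (with a.e. derivative `g`) is a `(λ,κ)`-almost geodesic for the
Kobayashi distance of `D`. -/
def AlmostGeodesicOn (D : Set E) (lam kap : ℝ) (σ g : ℝ → E) (a b : ℝ) : Prop :=
  MapsTo σ (Icc a b) D ∧ IsACWithDeriv σ g a b ∧
  (∀ s ∈ Icc a b, ∀ t ∈ Icc a b,
    (1 / lam) * |t - s| - kap ≤ kobDist D (σ s) (σ t) ∧
    kobDist D (σ s) (σ t) ≤ lam * |t - s| + kap) ∧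
  (∀ᵐ t ∂volume, t ∈ Icc a b → kobMetric D (σ t) (g t) ≤ lam)

/-- `σ : [a,b] → D` is a `C`-rough geodesic for the Kobayashi distance of `D`. -/
def RoughGeodesicOn (D : Set E) (C : ℝ) (σ : ℝ → E) (a b : ℝ) : Prop :=
  MapsTo σ (Icc a b) D ∧
  ∀ s ∈ Icc a b, ∀ t ∈ Icc a b,
    |t - s| - C ≤ kobDist D (σ s) (σ t) ∧ kobDist D (σ s) (σ t) ≤ |t - s| + C

/-- `ρ` is a `C¹` local defining function for `D` near `ξ` on the open set `W`. -/
def IsLocalDefiningFn (D : Set E) (ξ : E) (W : Set E) (ρ : E → ℝ) : Prop :=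
  IsOpen W ∧ ξ ∈ W ∧ ContDiffOn ℝ 1 ρ W ∧ (∀ x ∈ W, fderiv ℝ ρ x ≠ 0) ∧
  D ∩ W = {x ∈ W | ρ x < 0} ∧ frontier D ∩ W = {x ∈ W | ρ x = 0}

/-- `ξ` is a Dini-smooth boundary point of `D`: the boundary is `C¹` near `ξ` and the
unit normal admits a modulus of continuity `ω` satisfying the Dini condition. -/
def DiniSmoothBoundaryPoint (D : Set E) (ξ : E) : Prop :=
  ∃ (W : Set E) (ρ : E → ℝ) (ω : ℝ → ℝ),
    IsLocalDefiningFn D ξ W ρ ∧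
    (∀ t ∈ Icc (0:ℝ) 1, 0 ≤ ω t) ∧ MonotoneOn ω (Icc (0:ℝ) 1) ∧
    IntegrableOn (fun t => ω t / t) (Ioc (0:ℝ) 1) ∧
    ∀ x ∈ frontier D ∩ W, ∀ y ∈ frontier D ∩ W, ‖x - y‖ ≤ 1 →
      ‖(‖fderiv ℝ ρ x‖)⁻¹ • fderiv ℝ ρ x - (‖fderiv ℝ ρ y‖)⁻¹ • fderiv ℝ ρ y‖ ≤ ω ‖x - y‖

/-- `D` has `C^{1,ε}` boundary: near every boundary point there is a `C¹` defining
function whose differential is `ε`-Hölder. -/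
def HolderC1Boundary (D : Set E) (ε : ℝ) : Prop :=
  ∀ ξ ∈ frontier D, ∃ (W : Set E) (ρ : E → ℝ) (M : ℝ), 0 < M ∧
    IsLocalDefiningFn D ξ W ρ ∧
    ∀ x ∈ W, ∀ y ∈ W, ‖fderiv ℝ ρ x - fderiv ℝ ρ y‖ ≤ M * ‖x - y‖ ^ ε

/-- The complex affine tangent hyperplane of `∂D` at `x`, computed from a local
defining function `ρ`. -/
def complexTangentHyperplane (ρ : E → ℝ) (x : E) : Set E :=
  {w : E | fderiv ℝ ρ x (w - x) = 0 ∧ fderiv ℝ ρ x ((Complex.I : ℂ) • (w - x)) = 0}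

/-- The Gromov product of `x` and `y` with respect to the base point `o`, for the
Kobayashi distance of `D`. -/
def gromovProd (D : Set E) (o x y : E) : ℝ :=
  (kobDist D x o + kobDist D o y - kobDist D x y) / 2

end


/-!
A complex supporting functional at `ξ` maps `Ω` into a half-plane with `ξ` on its boundary, where
the Schwarz lemma makes the Kobayashi metric at least `|du| / (2 |u|)`, with `u` the difference of
the functional at `ξ` and at the moving point. Integrating along a curve bounds its Kobayashi length
below by half the variation of `log |u|`, and on the complex line through `x`, `y` and `ξ` the
functional multiplies all distances to `ξ` by the same constant.
-/

section HalfPlane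

lemma norm_sub_le_norm_add_conj {z w : ℂ} (hz : 0 ≤ z.re) (hw : 0 ≤ w.re) :
    ‖z - w‖ ≤ ‖z + starRingEnd ℂ w‖ := by
  have hsq : ‖z - w‖ ^ 2 ≤ ‖z + starRingEnd ℂ w‖ ^ 2 := by
    simp only [← Complex.normSq_eq_norm_sq, Complex.normSq_apply, Complex.sub_re, Complex.sub_im,
      Complex.add_re, Complex.add_im, Complex.conj_re, Complex.conj_im]
    nlinarith [mul_nonneg hz hw]
  exact le_of_sq_le_sq hsq (norm_nonneg _)

lemma norm_deriv_le_of_re_pos {F : ℂ → ℂ} {c : ℂ} {R : ℝ} (hR : 0 < R)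
    (hF : DifferentiableOn ℂ F (ball c R)) (hpos : ∀ z ∈ ball c R, 0 < (F z).re) :
    ‖deriv F c‖ ≤ 2 * (F c).re / R := by
  have hc : c ∈ ball c R := mem_ball_self hR
  set w := F c with hw
  have hne : ∀ z ∈ ball c R, F z + starRingEnd ℂ w ≠ 0 := fun z hz h => by
    have hre := congrArg Complex.re h
    simp only [Complex.add_re, Complex.conj_re, Complex.zero_re] at hre
    linarith [hpos z hz, hpos c hc]
  -- The Cayley transform centred at `w` maps the right half-plane to the unit disc, `w` to `0`.
  let G : ℂ → ℂ := fun z => (F z - w) / (F z + starRingEnd ℂ w)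
  have hGdiff : DifferentiableOn ℂ G (ball c R) := (hF.sub_const _).div (hF.add_const _) hne
  have hGmaps : MapsTo G (ball c R) (closedBall (G c) 1) := fun z hz => by
    have hGc : G c = 0 := by simp [G, ← hw]
    rw [hGc, mem_closedBall_zero_iff, norm_div, div_le_one (norm_pos_iff.2 (hne z hz))]
    exact norm_sub_le_norm_add_conj (hpos z hz).le (hpos c hc).le
  have hGderiv : HasDerivAt G (deriv F c / (w + starRingEnd ℂ w)) c := by
    have hF' := (hF.differentiableAt (isOpen_ball.mem_nhds hc)).hasDerivAt
    convert! (hF'.sub_const w).div (hF'.add_const (starRingEnd ℂ w)) (hne c hc) using 1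
    have := hne c hc
    rw [← hw] at this ⊢
    field_simp
    ring
  have hschwarz := Complex.norm_deriv_le_div_of_mapsTo_ball hGdiff hGmaps hR
  have hwpos : 0 < 2 * w.re := mul_pos two_pos (hpos c hc)
  rwa [hGderiv.deriv, Complex.add_conj, norm_div, Complex.norm_of_nonneg hwpos.le,
    div_le_iff₀ hwpos, one_div_mul_eq_div] at hschwarz

end HalfPlane

section KobayashiMetric

variable {E : Type*} [NormedAddCommGroup E] [NormedSpace ℂ E] {D : Set E} {x v : E}

/-- The pair `(f, ξ)` competes in the infimum defining `kobMetric D x v`: `f` is an analytic disc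
in `D` centred at `x` and `df₀(ξ) = v`. -/
structure IsKobDisc (D : Set E) (x v : E) (f : ℂ → E) (ξ : ℂ) : Prop where
  differentiableOn : DifferentiableOn ℂ f (ball 0 1)
  mapsTo : MapsTo f (ball 0 1) D
  map_zero : f 0 = x
  smul_deriv : ξ • deriv f 0 = v

lemma IsKobDisc.mono {D' : Set E} {f : ℂ → E} {ξ : ℂ} (hf : IsKobDisc D x v f ξ) (h : D ⊆ D') :
    IsKobDisc D' x v f ξ :=
  ⟨hf.differentiableOn, hf.mapsTo.mono_right h, hf.map_zero, hf.smul_deriv⟩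

lemma kobMetric_eq_sInf (D : Set E) (x v : E) :
    kobMetric D x v = sInf {r | ∃ f ξ, IsKobDisc D x v f ξ ∧ r = ‖ξ‖} := by
  have h0 : (0 : ℂ) ∈ ball (0 : ℂ) 1 := mem_ball_self one_pos
  simp only [kobMetric, derivWithin_of_isOpen isOpen_ball h0]
  congr 1
  ext r
  exact ⟨fun ⟨f, ξ, hd, hm, hx, hv, hr⟩ => ⟨f, ξ, ⟨hd, hm, hx, hv⟩, hr⟩,
    fun ⟨f, ξ, ⟨hd, hm, hx, hv⟩, hr⟩ => ⟨f, ξ, hd, hm, hx, hv, hr⟩⟩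

lemma kobMetric_nonneg (D : Set E) (x v : E) : 0 ≤ kobMetric D x v := by
  rw [kobMetric_eq_sInf]
  exact Real.sInf_nonneg fun _ ⟨_, _, _, hr⟩ => hr ▸ norm_nonneg _

lemma IsKobDisc.kobMetric_le {f : ℂ → E} {ξ : ℂ} (h : IsKobDisc D x v f ξ) :
    kobMetric D x v ≤ ‖ξ‖ := by
  rw [kobMetric_eq_sInf]
  exact csInf_le ⟨0, fun _ ⟨_, _, _, hr⟩ => hr ▸ norm_nonneg _⟩ ⟨f, ξ, h, rfl⟩

lemma exists_isKobDisc_of_ball_subset {r : ℝ} (hr : 0 < r) (hb : ball x r ⊆ D) (v : E) :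
    ∃ f ξ, IsKobDisc D x v f ξ ∧ ‖ξ‖ = ‖v‖ / r := by
  set ξ : ℂ := ((‖v‖ / r : ℝ) : ℂ) with hξdef
  have hξ : ‖ξ‖ = ‖v‖ / r := Complex.norm_of_nonneg (by positivity)
  have hder : ∀ z, HasDerivAt (fun z : ℂ => x + z • ξ⁻¹ • v) (ξ⁻¹ • v) z := fun z => by
    simpa using ((hasDerivAt_id z).smul_const (ξ⁻¹ • v)).const_add x
  refine ⟨fun z => x + z • ξ⁻¹ • v, ξ,
    ⟨fun z _ => (hder z).differentiableAt.differentiableWithinAt, fun z hz => hb ?_, by simp, ?_⟩,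
    hξ⟩
  · rw [mem_ball_zero_iff] at hz
    have hw : ‖ξ⁻¹ • v‖ ≤ r := by
      rw [norm_smul, norm_inv, hξ, inv_div, div_mul_eq_mul_div]
      exact div_le_of_le_mul₀ (norm_nonneg v) hr.le le_rfl
    rw [mem_ball_iff_norm, add_sub_cancel_left, norm_smul]
    nlinarith [norm_nonneg z]
  · rw [(hder 0).deriv]
    rcases eq_or_ne v 0 with rfl | hv
    · simp
    · refine smul_inv_smul₀ (norm_ne_zero_iff.1 ?_) v
      rw [hξ]
      have := norm_pos_iff.2 hv
      positivity

lemma kobMetric_le_norm_div {r : ℝ} (hr : 0 < r) (hb : ball x r ⊆ D) (v : E) :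
    kobMetric D x v ≤ ‖v‖ / r := by
  obtain ⟨f, ξ, hf, hξ⟩ := exists_isKobDisc_of_ball_subset hr hb v
  exact hξ ▸ hf.kobMetric_le

lemma setOf_norm_isKobDisc_nonempty (hD : IsOpen D) (hx : x ∈ D) (v : E) :
    {r | ∃ f ξ, IsKobDisc D x v f ξ ∧ r = ‖ξ‖}.Nonempty := by
  obtain ⟨r, hr, hb⟩ := Metric.isOpen_iff.1 hD x hx
  obtain ⟨f, ξ, hf, -⟩ := exists_isKobDisc_of_ball_subset hr hb v
  exact ⟨_, f, ξ, hf, rfl⟩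

lemma le_kobMetric (hD : IsOpen D) (hx : x ∈ D) {r : ℝ}
    (h : ∀ f ξ, IsKobDisc D x v f ξ → r ≤ ‖ξ‖) : r ≤ kobMetric D x v := by
  rw [kobMetric_eq_sInf]
  exact le_csInf (setOf_norm_isKobDisc_nonempty hD hx v) fun _ ⟨f, ξ, hf, hr⟩ => hr ▸ h f ξ hf

lemma exists_isKobDisc_norm_lt (hD : IsOpen D) (hx : x ∈ D) {r : ℝ} (h : kobMetric D x v < r) :
    ∃ f ξ, IsKobDisc D x v f ξ ∧ ‖ξ‖ < r := by
  rw [kobMetric_eq_sInf] at h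
  obtain ⟨_, ⟨f, ξ, hf, rfl⟩, hξ⟩ :=
    exists_lt_of_csInf_lt (setOf_norm_isKobDisc_nonempty hD hx v) h
  exact ⟨f, ξ, hf, hξ⟩

lemma norm_fderiv_div_two_mul_re_le_kobMetric {h : E → ℂ} (hD : IsOpen D)
    (hd : DifferentiableOn ℂ h D) (hpos : ∀ z ∈ D, 0 < (h z).re) (hx : x ∈ D) (v : E) :
    ‖fderiv ℂ h x v‖ / (2 * (h x).re) ≤ kobMetric D x v := by
  refine le_kobMetric hD hx fun f ξ hf => ?_
  have h0 : (0 : ℂ) ∈ ball (0 : ℂ) 1 := mem_ball_self one_pos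
  have hder : HasDerivAt (h ∘ f) (fderiv ℂ h x (deriv f 0)) 0 := by
    have hx' := (hd.differentiableAt (hD.mem_nhds hx)).hasFDerivAt
    rw [← hf.map_zero] at hx' ⊢
    exact hx'.comp_hasDerivAt 0
      (hf.differentiableOn.differentiableAt (isOpen_ball.mem_nhds h0)).hasDerivAt
  have hschwarz : ‖fderiv ℂ h x (deriv f 0)‖ ≤ 2 * (h x).re := by
    simpa [hder.deriv, hf.map_zero] using norm_deriv_le_of_re_pos one_pos
      (hd.comp hf.differentiableOn hf.mapsTo) fun z hz => hpos _ (hf.mapsTo hz)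
  rw [div_le_iff₀ (mul_pos two_pos (hpos x hx)), ← hf.smul_deriv, map_smul, norm_smul]
  gcongr

end KobayashiMetric

section Semicontinuity

variable {E : Type*} [NormedAddCommGroup E] [NormedSpace ℂ E] {D : Set E} {x v : E}

lemma IsKobDisc.comp_mul {f : ℂ → E} {ξ s c : ℂ} (hf : IsKobDisc D x v f ξ) (hs : ‖s‖ ≤ 1)
    (hsc : c * s = ξ) : IsKobDisc (f '' closedBall 0 ‖s‖) x v (fun z => f (s * z)) c := by
  have hsz : MapsTo (s * ·) (ball (0 : ℂ) 1) (ball 0 1 ∩ closedBall 0 ‖s‖) := fun z hz => by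
    rw [mem_ball_zero_iff] at hz
    rw [mem_inter_iff, mem_ball_zero_iff, mem_closedBall_zero_iff, norm_mul]
    constructor <;> nlinarith [norm_nonneg s, norm_nonneg z]
  refine ⟨hf.differentiableOn.comp (by fun_prop) fun z hz => (hsz hz).1,
    fun z hz => mem_image_of_mem f (hsz hz).2, by simp [hf.map_zero], ?_⟩
  rw [deriv_comp_mul_left, mul_zero, smul_smul, hsc, hf.smul_deriv]

lemma exists_isKobDisc_thickening_subset (hD : IsOpen D) (hx : x ∈ D) {c : ℝ}
    (h : kobMetric D x v < c) :
    ∃ f K δ, IsKobDisc K x v f c ∧ 0 < δ ∧ thickening δ K ⊆ D := by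
  obtain ⟨f, ξ, hf, hξ⟩ := exists_isKobDisc_norm_lt hD hx h
  have hc : 0 < c := (norm_nonneg ξ).trans_lt hξ
  have hs : ‖ξ / c‖ < 1 := by
    rwa [norm_div, Complex.norm_of_nonneg hc.le, div_lt_one hc]
  have hsub : closedBall (0 : ℂ) ‖ξ / c‖ ⊆ ball 0 1 := closedBall_subset_ball hs
  have hK : IsCompact (f '' closedBall (0 : ℂ) ‖ξ / c‖) :=
    (isCompact_closedBall _ _).image_of_continuousOn (hf.differentiableOn.continuousOn.mono hsub)
  obtain ⟨δ, hδ, hth⟩ :=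
    hK.exists_thickening_subset_open hD (hf.mapsTo.mono_left hsub).image_subset
  have hc0 : (c : ℂ) ≠ 0 := by exact_mod_cast hc.ne'
  exact ⟨_, _, δ, hf.comp_mul hs.le (mul_div_cancel₀ ξ hc0), hδ, hth⟩

lemma IsKobDisc.add_affine {K : Set E} {f : ℂ → E} {c : ℂ} {δ : ℝ} (hf : IsKobDisc K x v f c)
    (hc : c ≠ 0) {x' v' : E} (hx' : ‖x' - x‖ < δ / 2) (hv' : ‖v' - v‖ ≤ ‖c‖ * (δ / 2)) :
    IsKobDisc (thickening δ K) x' v' (fun z => f z + ((x' - x) + z • c⁻¹ • (v' - v))) c := by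
  set w := c⁻¹ • (v' - v)
  have hw : ‖w‖ ≤ δ / 2 := by
    rwa [norm_smul, norm_inv, inv_mul_le_iff₀ (norm_pos_iff.2 hc)]
  have hder : ∀ z : ℂ, HasDerivAt (fun z : ℂ => (x' - x) + z • w) w z := fun z => by
    simpa using ((hasDerivAt_id z).smul_const w).const_add (x' - x)
  have hf0 : HasDerivAt f (deriv f 0) 0 := (hf.differentiableOn.differentiableAt
    (isOpen_ball.mem_nhds (mem_ball_self one_pos))).hasDerivAt
  refine ⟨hf.differentiableOn.add fun z _ => (hder z).differentiableAt.differentiableWithinAt,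
    fun z hz => ?_, by simp [hf.map_zero], ?_⟩
  · refine mem_thickening_iff.2 ⟨f z, hf.mapsTo hz, ?_⟩
    rw [mem_ball_zero_iff] at hz
    have hzw : ‖z • w‖ ≤ ‖w‖ := by
      rw [norm_smul]
      exact mul_le_of_le_one_left (norm_nonneg w) hz.le
    rw [dist_eq_norm, add_sub_cancel_left]
    linarith [norm_add_le (x' - x) (z • w)]
  · rw [(hf0.fun_add (hder 0)).deriv, smul_add, hf.smul_deriv, smul_inv_smul₀ hc, add_sub_cancel]

lemma upperSemicontinuousOn_kobMetric (hD : IsOpen D) :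
    UpperSemicontinuousOn (fun p : E × E => kobMetric D p.1 p.2) (D ×ˢ univ) := by
  rintro ⟨x, v⟩ ⟨hx, -⟩ r hr
  obtain ⟨c, hkc, hcr⟩ := exists_between hr
  obtain ⟨f, K, δ, hf, hδ, hth⟩ := exists_isKobDisc_thickening_subset hD hx hkc
  have hc : 0 < c := (kobMetric_nonneg D x v).trans_lt hkc
  have hc0 : (c : ℂ) ≠ 0 := by exact_mod_cast hc.ne'
  have hnorm : ‖(c : ℂ)‖ = c := Complex.norm_of_nonneg hc.le
  have hnhds : ball x (δ / 2) ×ˢ ball v (c * (δ / 2)) ∈ 𝓝 (x, v) :=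
    prod_mem_nhds (ball_mem_nhds _ (by positivity)) (ball_mem_nhds _ (by positivity))
  filter_upwards [mem_nhdsWithin_of_mem_nhds hnhds]
  rintro ⟨x', v'⟩ ⟨hx', hv'⟩
  rw [mem_ball_iff_norm] at hx' hv'
  have hdisc := (hf.add_affine hc0 hx' (by rw [hnorm]; exact hv'.le)).mono hth
  exact (hdisc.kobMetric_le.trans_eq hnorm).trans_lt hcr

lemma kobMetric_of_notMem (hx : x ∉ D) (v : E) : kobMetric D x v = 0 := by
  rw [kobMetric_eq_sInf]
  convert! Real.sInf_empty
  refine eq_empty_of_forall_notMem fun r ⟨f, ξ, hf, _⟩ => hx ?_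
  exact hf.map_zero ▸ hf.mapsTo (mem_ball_self one_pos)

lemma measurable_kobMetric [MeasurableSpace (E × E)] [BorelSpace (E × E)] (hD : IsOpen D) :
    Measurable fun p : E × E => kobMetric D p.1 p.2 := by
  have hDm : MeasurableSet (D ×ˢ univ : Set (E × E)) := (hD.prod isOpen_univ).measurableSet
  refine measurable_of_restrict_of_restrict_compl hDm
    (upperSemicontinuousOn_iff_restrict.2 (upperSemicontinuousOn_kobMetric hD)).measurable ?_
  have hzero : (D ×ˢ univ : Set (E × E))ᶜ.domRestrict (fun p => kobMetric D p.1 p.2) = 0 :=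
    funext fun p => kobMetric_of_notMem (fun h => p.2 ⟨h, mem_univ _⟩) _
  rw [hzero]
  exact measurable_zero

lemma aestronglyMeasurable_kobMetric {α : Type*} [MeasurableSpace α] {μ : Measure α} {σ g : α → E}
    (hD : IsOpen D) (hσ : AEStronglyMeasurable σ μ) (hg : AEStronglyMeasurable g μ) :
    AEStronglyMeasurable (fun t => kobMetric D (σ t) (g t)) μ := by
  borelize (E × E)
  exact ((measurable_kobMetric hD).comp_aemeasurable (hσ.prodMk hg).aemeasurable
    ).aestronglyMeasurable

end Semicontinuity

section AbsoluteContinuity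

lemma absolutelyContinuousOnInterval_of_dist_le {X Y : Type*} [PseudoMetricSpace X]
    [PseudoMetricSpace Y] {f : ℝ → X} {Φ : ℝ → Y} {a b : ℝ} (K : ℝ)
    (hΦ : AbsolutelyContinuousOnInterval Φ a b)
    (h : ∀ s ∈ uIcc a b, ∀ t ∈ uIcc a b, dist (f s) (f t) ≤ K * dist (Φ s) (Φ t)) :
    AbsolutelyContinuousOnInterval f a b := by
  have hKΦ := Filter.Tendsto.const_mul K hΦ
  rw [mul_zero] at hKΦ
  refine squeeze_zero' (Eventually.of_forall fun _ => Finset.sum_nonneg fun _ _ => dist_nonneg)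
    ?_ hKΦ
  filter_upwards [mem_inf_of_right (mem_principal_self _)] with I hI
  rw [Finset.mul_sum]
  exact Finset.sum_le_sum fun i hi => h _ (hI.1 i hi).1 _ (hI.1 i hi).2

lemma dist_log_log_le {m p q : ℝ} (hm : 0 < m) (hp : m ≤ p) (hq : m ≤ q) :
    dist (Real.log p) (Real.log q) ≤ m⁻¹ * dist p q := by
  have hderiv : ∀ r ∈ Ici m, ‖deriv Real.log r‖ ≤ m⁻¹ := fun r hr => by
    rw [Real.deriv_log, norm_inv, Real.norm_of_nonneg (hm.le.trans hr)]
    exact inv_anti₀ hm hr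
  exact (convex_Ici m).norm_image_sub_le_of_norm_deriv_le
    (fun r hr => Real.differentiableAt_log (hm.trans_le hr).ne') hderiv hq hp

lemma absolutelyContinuousOnInterval_log {f : ℝ → ℝ} {a b : ℝ}
    (hf : AbsolutelyContinuousOnInterval f a b) (hpos : ∀ t ∈ uIcc a b, 0 < f t) :
    AbsolutelyContinuousOnInterval (fun t => Real.log (f t)) a b := by
  obtain ⟨t₀, ht₀, hmin⟩ := isCompact_uIcc.exists_isMinOn nonempty_uIcc hf.continuousOn
  exact absolutelyContinuousOnInterval_of_dist_le (f t₀)⁻¹ hf fun s hs t ht =>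
    dist_log_log_le (hpos t₀ ht₀) (hmin hs) (hmin ht)

lemma abs_deriv_norm_le {F : Type*} [NormedAddCommGroup F] [NormedSpace ℝ F] {u : ℝ → F} {u' : F}
    {t : ℝ} (hu : HasDerivAt u u' t) : |deriv (fun s => ‖u s‖) t| ≤ ‖u'‖ := by
  by_cases hd : DifferentiableAt ℝ (fun s => ‖u s‖) t
  · refine le_of_tendsto_of_tendsto (hasDerivAt_iff_tendsto_slope.1 hd.hasDerivAt).abs
      (hasDerivAt_iff_tendsto_slope.1 hu).norm (Eventually.of_forall fun s => ?_)
    simp only [slope_def_module]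
    rw [smul_eq_mul, abs_mul, norm_smul, Real.norm_eq_abs]
    gcongr
    exact abs_norm_sub_norm_le _ _
  · rw [deriv_zero_of_not_differentiableAt hd, abs_zero]
    exact norm_nonneg _

variable {E F : Type*} [NormedAddCommGroup E] [NormedSpace ℂ E]
  [NormedAddCommGroup F] [NormedSpace ℂ F] {σ g : ℝ → E} {a b : ℝ}

namespace IsACWithDeriv

lemma intervalIntegrable_of_mem (h : IsACWithDeriv σ g a b) {s t : ℝ} (hs : s ∈ uIcc a b)
    (ht : t ∈ uIcc a b) : IntervalIntegrable g volume s t :=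
  h.1.mono_set (ordConnected_uIcc.uIcc_subset hs ht)

lemma sub_eq_integral (h : IsACWithDeriv σ g a b) (hab : a ≤ b) {s t : ℝ} (hs : s ∈ uIcc a b)
    (ht : t ∈ uIcc a b) : σ s - σ t = ∫ r in t..s, g r := by
  have ha : a ∈ uIcc a b := left_mem_uIcc
  rw [h.2 s (uIcc_of_le hab ▸ hs), h.2 t (uIcc_of_le hab ▸ ht), add_sub_add_left_eq_sub,
    intervalIntegral.integral_interval_sub_left (h.intervalIntegrable_of_mem ha hs)
      (h.intervalIntegrable_of_mem ha ht)]

lemma absolutelyContinuousOnInterval (h : IsACWithDeriv σ g a b) (hab : a ≤ b) :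
    AbsolutelyContinuousOnInterval σ a b := by
  refine absolutelyContinuousOnInterval_of_dist_le 1
    (h.1.norm.absolutelyContinuousOnInterval_intervalIntegral left_mem_uIcc) fun s hs t ht => ?_
  have ha : a ∈ uIcc a b := left_mem_uIcc
  rw [one_mul, dist_eq_norm, Real.dist_eq, h.sub_eq_integral hab hs ht,
    intervalIntegral.integral_interval_sub_left (h.intervalIntegrable_of_mem ha hs).norm
      (h.intervalIntegrable_of_mem ha ht).norm]
  exact intervalIntegral.norm_integral_le_abs_integral_norm

lemma continuousOn (h : IsACWithDeriv σ g a b) (hab : a ≤ b) : ContinuousOn σ (Icc a b) :=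
  uIcc_of_le hab ▸ (h.absolutelyContinuousOnInterval hab).continuousOn

lemma ae_hasDerivAt [CompleteSpace E] (h : IsACWithDeriv σ g a b) :
    ∀ᵐ t, t ∈ Ioo a b → HasDerivAt σ (g t) t := by
  filter_upwards [h.1.ae_hasDerivAt_integral] with t ht htI
  refine ((ht (Ioo_subset_Icc_self.trans Icc_subset_uIcc htI) a left_mem_uIcc).const_add
    (σ a)).congr_of_eventuallyEq ?_
  filter_upwards [Icc_mem_nhds htI.1 htI.2] with s hs using h.2 s hs

lemma const_sub_clm [CompleteSpace E] [CompleteSpace F] (h : IsACWithDeriv σ g a b)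
    (L : E →L[ℂ] F) (c : F) :
    IsACWithDeriv (fun t => c - L (σ t)) (fun t => -L (g t)) a b := by
  refine ⟨⟨(L.integrable_comp h.1.1).neg, (L.integrable_comp h.1.2).neg⟩, fun t ht => ?_⟩
  have hint : ∫ s in a..t, L (g s) = L (∫ s in a..t, g s) := L.intervalIntegral_comp_comm
    (h.intervalIntegrable_of_mem left_mem_uIcc (Icc_subset_uIcc ht))
  rw [intervalIntegral.integral_neg, hint]
  simp only [h.2 t ht, map_add]
  abel

lemma intervalIntegrable_norm_div_norm (h : IsACWithDeriv σ g a b) (hab : a ≤ b)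
    (hne : ∀ t ∈ Icc a b, σ t ≠ 0) :
    IntervalIntegrable (fun t => ‖g t‖ / ‖σ t‖) volume a b := by
  simp_rw [div_eq_mul_inv]
  refine h.1.norm.mul_continuousOn ?_
  rw [uIcc_of_le hab]
  exact (h.continuousOn hab).norm.inv₀ fun t ht => norm_ne_zero_iff.2 (hne t ht)

lemma log_norm_sub_log_norm_le_integral [CompleteSpace E] (h : IsACWithDeriv σ g a b) (hab : a ≤ b)
    (hne : ∀ t ∈ Icc a b, σ t ≠ 0) :
    Real.log ‖σ a‖ - Real.log ‖σ b‖ ≤ ∫ t in a..b, ‖g t‖ / ‖σ t‖ := by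
  have hnorm : AbsolutelyContinuousOnInterval (fun t => ‖σ t‖) a b :=
    absolutelyContinuousOnInterval_of_dist_le 1 (h.absolutelyContinuousOnInterval hab)
      fun s _ t _ => (dist_norm_norm_le _ _).trans_eq (by rw [one_mul, dist_eq_norm])
  have hlog : AbsolutelyContinuousOnInterval (fun t => Real.log ‖σ t‖) a b :=
    absolutelyContinuousOnInterval_log hnorm fun t ht =>
      norm_pos_iff.2 (hne t (uIcc_of_le hab ▸ ht))
  have hderiv : ∀ᵐ t ∂volume.restrict (Icc a b),
      -deriv (fun s => Real.log ‖σ s‖) t ≤ ‖g t‖ / ‖σ t‖ := by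
    rw [← restrict_Ioo_eq_restrict_Icc, ae_restrict_iff' measurableSet_Ioo]
    filter_upwards [h.ae_hasDerivAt, hnorm.ae_differentiableAt] with t hσ hd ht
    have htI := Ioo_subset_Icc_self ht
    rw [deriv.log (hd (Icc_subset_uIcc htI)) (norm_ne_zero_iff.2 (hne t htI)), ← neg_div]
    gcongr
    exact (neg_le_abs _).trans (abs_deriv_norm_le (hσ ht))
  calc Real.log ‖σ a‖ - Real.log ‖σ b‖
      = ∫ t in a..b, -deriv (fun s => Real.log ‖σ s‖) t := by
        rw [intervalIntegral.integral_neg, hlog.integral_deriv_eq_sub, neg_sub]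
    _ ≤ ∫ t in a..b, ‖g t‖ / ‖σ t‖ :=
        intervalIntegral.integral_mono_ae_restrict hab hlog.intervalIntegrable_deriv.neg
          (h.intervalIntegrable_norm_div_norm hab hne) hderiv

lemma intervalIntegrable_kobMetric {D : Set E} (hD : IsOpen D) (h : IsACWithDeriv σ g a b)
    (hab : a ≤ b) (hmaps : MapsTo σ (Icc a b) D) :
    IntervalIntegrable (fun t => kobMetric D (σ t) (g t)) volume a b := by
  have hσ := h.continuousOn hab
  obtain ⟨δ, hδ, hth⟩ :=
    (isCompact_Icc.image_of_continuousOn hσ).exists_thickening_subset_open hD hmaps.image_subset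
  have hg := h.1
  rw [intervalIntegrable_iff_integrableOn_Icc_of_le hab] at hg ⊢
  refine Integrable.mono' (hg.norm.div_const δ) (aestronglyMeasurable_kobMetric hD
    (hσ.aestronglyMeasurable_of_isCompact isCompact_Icc measurableSet_Icc) hg.aestronglyMeasurable)
    ((ae_restrict_iff' measurableSet_Icc).2 (Eventually.of_forall fun t ht => ?_))
  rw [Real.norm_of_nonneg (kobMetric_nonneg _ _ _)]
  exact kobMetric_le_norm_div hδ ((ball_subset_thickening (mem_image_of_mem σ ht) δ).trans hth) _

end IsACWithDeriv

end AbsoluteContinuity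

section KobayashiDistance

variable {E : Type*} [NormedAddCommGroup E] [NormedSpace ℂ E] [CompleteSpace E] {D : Set E}
  {x y : E}

lemma le_kobDist_of_convex (hconv : Convex ℝ D) (hx : x ∈ D) (hy : y ∈ D) {r : ℝ}
    (h : ∀ (a b : ℝ) (σ g : ℝ → E), a ≤ b → IsACWithDeriv σ g a b → MapsTo σ (Icc a b) D →
      σ a = x → σ b = y → r ≤ ∫ t in a..b, kobMetric D (σ t) (g t)) :
    r ≤ kobDist D x y := by
  have hsegment : IsACWithDeriv (fun t : ℝ => x + t • (y - x)) (fun _ => y - x) 0 1 :=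
    ⟨intervalIntegrable_const, fun t _ => by simp [smul_sub]⟩
  refine le_csInf ⟨_, 0, 1, _, _, zero_le_one, hsegment,
    fun t ht => hconv.add_smul_sub_mem hx hy ht, by simp, by simp, rfl⟩ ?_
  rintro _ ⟨a, b, σ, g, hab, hac, hmaps, hσa, hσb, rfl⟩
  exact h a b σ g hab hac hmaps hσa hσb

lemma half_log_le_integral_kobMetric (hD : IsOpen D) (L : E →L[ℂ] ℂ) {c : ℂ}
    (hpos : ∀ z ∈ D, 0 < (c - L z).re) {a b : ℝ} {σ g : ℝ → E} (hab : a ≤ b)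
    (hac : IsACWithDeriv σ g a b) (hmaps : MapsTo σ (Icc a b) D) :
    1 / 2 * Real.log (‖c - L (σ a)‖ / ‖c - L (σ b)‖) ≤
      ∫ t in a..b, kobMetric D (σ t) (g t) := by
  have hne : ∀ t ∈ Icc a b, c - L (σ t) ≠ 0 := fun t ht h0 => by
    simpa [h0] using hpos _ (hmaps ht)
  have hu := hac.const_sub_clm L c
  have hmetric : ∀ t ∈ Icc a b, ‖-L (g t)‖ / ‖c - L (σ t)‖ ≤ 2 * kobMetric D (σ t) (g t) := by
    intro t ht
    have hbound := norm_fderiv_div_two_mul_re_le_kobMetric hD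
      (L.differentiable.const_sub c).differentiableOn hpos (hmaps ht) (g t)
    rw [fderiv_const_sub, L.fderiv, neg_apply, ← div_div, div_right_comm,
      div_le_iff₀' two_pos] at hbound
    refine le_trans ?_ hbound
    gcongr
    · exact hpos _ (hmaps ht)
    · exact Complex.re_le_norm _
  have hlength := (hu.log_norm_sub_log_norm_le_integral hab hne).trans
    (intervalIntegral.integral_mono_on hab (hu.intervalIntegrable_norm_div_norm hab hne)
      ((hac.intervalIntegrable_kobMetric hD hab hmaps).const_mul 2) hmetric)
  rw [intervalIntegral.integral_const_mul] at hlength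
  rw [Real.log_div (norm_ne_zero_iff.2 (hne a (left_mem_Icc.2 hab)))
    (norm_ne_zero_iff.2 (hne b (right_mem_Icc.2 hab)))]
  linarith

lemma half_log_le_kobDist_of_convex (hD : IsOpen D) (hconv : Convex ℝ D) (L : E →L[ℂ] ℂ) {c : ℂ}
    (hpos : ∀ z ∈ D, 0 < (c - L z).re) (hx : x ∈ D) (hy : y ∈ D) :
    1 / 2 * Real.log (‖c - L x‖ / ‖c - L y‖) ≤ kobDist D x y := by
  refine le_kobDist_of_convex hconv hx hy ?_
  rintro a b σ g hab hac hmaps rfl rfl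
  exact half_log_le_integral_kobMetric hD L hpos hab hac hmaps

end KobayashiDistance

lemma norm_map_smul_div_norm_map_smul {𝕜 E F : Type*} [NormedField 𝕜] [NormedAddCommGroup E]
    [NormedSpace 𝕜 E] [NormedAddCommGroup F] [NormedSpace 𝕜 F] (L : E →ₗ[𝕜] F) {w : E}
    (hw : L w ≠ 0) (s t : 𝕜) : ‖L (s • w)‖ / ‖L (t • w)‖ = ‖s • w‖ / ‖t • w‖ := by
  have hw0 : w ≠ 0 := fun h => hw (h ▸ map_zero L)
  simp only [map_smul, norm_smul]
  rw [mul_div_mul_right _ _ (norm_ne_zero_iff.2 hw), mul_div_mul_right _ _ (norm_ne_zero_iff.2 hw0)]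

theorem statement_12_general {E : Type*} [NormedAddCommGroup E] [NormedSpace ℂ E] [CompleteSpace E]
    {Ω : Set E} (hΩo : IsOpen Ω) (hconv : Convex ℝ Ω) {x y ξ : E} (hx : x ∈ Ω) (hy : y ∈ Ω)
    (hξ : ξ ∉ Ω) (hline : ∃ c : ℂ, ξ = x + c • (x - y)) :
    1 / 2 * Real.log (‖x - ξ‖ / ‖y - ξ‖) ≤ kobDist Ω x y := by
  obtain ⟨L, hL⟩ := RCLike.geometric_hahn_banach_open_point (𝕜 := ℂ) hconv hΩo hξ
  have hpos : ∀ z ∈ Ω, 0 < (L ξ - L z).re := fun z hz => by simpa using hL z hz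
  obtain ⟨c, hc⟩ := hline
  have hxξ : ξ - x = c • (x - y) := by rw [hc]; module
  have hyξ : ξ - y = (c + 1) • (x - y) := by rw [hc]; module
  have hLxy : L (x - y) ≠ 0 := fun h => by
    simpa [← map_sub, hxξ, h] using hpos x hx
  have hratio : ‖L ξ - L x‖ / ‖L ξ - L y‖ = ‖x - ξ‖ / ‖y - ξ‖ := by
    rw [← map_sub, ← map_sub, norm_sub_rev x, norm_sub_rev y, hxξ, hyξ]
    exact norm_map_smul_div_norm_map_smul L.toLinearMap hLxy c (c + 1)
  exact hratio ▸ half_log_le_kobDist_of_convex hΩo hconv L hpos hx hy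

theorem statement_12 {n : ℕ}
    (Ω : Set (EuclideanSpace ℂ (Fin n)))
    (hΩo : IsOpen Ω) (hne : Ω.Nonempty) (hΩb : Bornology.IsBounded Ω)
    (hconv : Convex ℝ Ω)
    (x y : EuclideanSpace ℂ (Fin n)) (hx : x ∈ Ω) (hy : y ∈ Ω) (hxy : x ≠ y)
    (ξ : EuclideanSpace ℂ (Fin n)) (hξ : ξ ∈ frontier Ω) (hline : ∃ c : ℂ, ξ = x + c • (x - y)) :
    (1 / 2) * Real.log (‖x - ξ‖ / ‖y - ξ‖) ≤ kobDist Ω x y := by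
  exact statement_12_general hΩo hconv hx hy
    ((disjoint_frontier_iff_isOpen.2 hΩo).notMem_of_mem_left hξ) hline
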